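/- Let n ≥ 2 and let V ⊆ F_2^{2n} be a self-dual code of length 2n. Then there exist a permutation σ of the 2n coordinates and an n × 2n matrix M over F_2 whose associated block matrix is boxed, such that the image of V under the coordinate permutation induced by σ equals the row space of M. In other words, every self-dual code of length at least 4 is equivalent to a code generated by a boxed matrix. -/

import Mathlib

/-- Self-duality over an arbitrary finite index type. -/
def SelfDualCode {κ : Type} [Fintype κ] (U : Submodule (ZMod 2) (κ → ZMod 2)) : Prop :=
  ∀ y : κ → ZMod 2, y ∈ U ↔ ∀ x ∈ U, ∑ i, x i * y i = 0

/-- Reindexing of a code. -/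
def reix {κ μ : Type} (e : μ ≃ κ) (U : Submodule (ZMod 2) (κ → ZMod 2)) :
    Submodule (ZMod 2) (μ → ZMod 2) :=
  U.comap (LinearMap.funLeft (ZMod 2) (ZMod 2) e.symm)

theorem mem_reix {κ μ : Type} (e : μ ≃ κ) (U : Submodule (ZMod 2) (κ → ZMod 2))
    (v : μ → ZMod 2) : v ∈ reix e U ↔ v ∘ e.symm ∈ U := Iff.rfl

theorem selfDual_reix {κ μ : Type} [Fintype κ] [Fintype μ] (e : μ ≃ κ)
    (U : Submodule (ZMod 2) (κ → ZMod 2)) (h : SelfDualCode U) :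
    SelfDualCode (reix e U) := by
  intro y
  rw [mem_reix, h]
  constructor
  · intro H x hx
    rw [← H _ hx]
    exact (Equiv.sum_comp e.symm (fun k => x k * y k)).symm
  · intro H x hx
    rw [← H (x ∘ e) (by rw [mem_reix]; convert hx using 1; ext; simp)]
    rw [← Equiv.sum_comp e]
    simp

theorem z2_cases (a : ZMod 2) : a = 0 ∨ a = 1 := by
  revert a; decide

theorem z2_add_eq_zero {a b : ZMod 2} (h : a + b = 0) : a = b := by
  revert a b; decide

section
variable {ι : Type} [Fintype ι] [DecidableEq ι]

/-- Codewords constant on all pairs are constant. -/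
def PairRigid (U : Submodule (ZMod 2) (ι × Bool → ZMod 2)) : Prop :=
  ∀ v ∈ U, (∀ j, v (j, false) = v (j, true)) → ∀ a b, v (a, false) = v (b, false)

theorem sum_pairs (f : ι × Bool → ZMod 2) :
    ∑ k, f k = ∑ j, (f (j, false) + f (j, true)) := by
  rw [Fintype.sum_prod_type]
  refine Finset.sum_congr rfl fun j _ => ?_
  simp [add_comm]

theorem step_swap (U : Submodule (ZMod 2) (ι × Bool → ZMod 2)) (h : SelfDualCode U)
    (s : Equiv.Perm (ι × Bool)) (w : ι × Bool → ZMod 2) (hw : w ∈ U)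
    (hwp : ∀ j, w (s (j, false)) = w (s (j, true)))
    (a b : ι) (hab : w (s (a, false)) ≠ w (s (b, false))) :
    ∃ t : Equiv.Perm (ι × Bool),
      {v | v ∈ U ∧ ∀ j, v (t (j, false)) = v (t (j, true))} ⊂
      {v | v ∈ U ∧ ∀ j, v (s (j, false)) = v (s (j, true))} := by
  have hne : a ≠ b := by rintro rfl; exact hab rfl
  refine ⟨(Equiv.swap (a, true) (b, false)).trans s, ?_⟩
  have ea0 : Equiv.swap (a, true) (b, false) (a, false) = (a, false) :=
    Equiv.swap_apply_of_ne_of_ne (by simp) (by simp [hne])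
  have eb1 : Equiv.swap (a, true) (b, false) (b, true) = (b, true) :=
    Equiv.swap_apply_of_ne_of_ne (by simp [hne.symm]) (by simp)
  have eo : ∀ j, j ≠ a → j ≠ b → ∀ c, Equiv.swap (a, true) (b, false) (j, c) = (j, c) :=
    fun j h1 h2 c => Equiv.swap_apply_of_ne_of_ne (by simp [h1]) (by simp [h2])
  rw [Set.ssubset_iff_of_subset]
  · refine ⟨w, ⟨hw, hwp⟩, ?_⟩
    rintro ⟨-, H⟩
    have := H a
    simp only [Equiv.trans_apply, ea0, Equiv.swap_apply_left] at this
    exact hab this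
  · rintro v ⟨hv, H⟩
    refine ⟨hv, ?_⟩
    have Ha := H a
    have Hb := H b
    simp only [Equiv.trans_apply, ea0, eb1, Equiv.swap_apply_left, Equiv.swap_apply_right] at Ha Hb
    have Ho : ∀ j, j ≠ a → j ≠ b → v (s (j, false)) = v (s (j, true)) := by
      intro j h1 h2
      have := H j
      simpa only [Equiv.trans_apply, eo j h1 h2] using this
    have hs := (h w).1 hw v hv
    rw [← Equiv.sum_comp s, sum_pairs] at hs
    have hz : ∀ j ∈ Finset.univ, j ∉ ({a, b} : Finset ι) →
        v (s (j, false)) * w (s (j, false)) + v (s (j, true)) * w (s (j, true)) = 0 := by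
      intro j _ hj
      simp only [Finset.mem_insert, Finset.mem_singleton, not_or] at hj
      rw [Ho j hj.1 hj.2, hwp j]
      exact CharTwo.add_self_eq_zero _
    rw [← Finset.sum_subset (Finset.subset_univ {a, b}) hz, Finset.sum_pair hne] at hs
    rw [← hwp a, ← hwp b, ← Ha, Hb] at hs
    have key : v (s (a, false)) = v (s (b, true)) := by
      revert hs hab
      generalize w (s (a, false)) = p
      generalize w (s (b, false)) = q
      generalize v (s (a, false)) = x
      generalize v (s (b, true)) = y
      revert p q x y
      decide
    intro j
    by_cases h1 : j = a
    · subst h1; rw [key, Hb]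
    by_cases h2 : j = b
    · subst h2; rw [← Ha, key]
    exact Ho j h1 h2

theorem exists_rigid (U : Submodule (ZMod 2) (ι × Bool → ZMod 2)) (h : SelfDualCode U) :
    ∃ s : Equiv.Perm (ι × Bool), PairRigid (reix s U) := by
  obtain ⟨s, hs⟩ := Finite.exists_min (fun s : Equiv.Perm (ι × Bool) =>
    Set.ncard {v | v ∈ U ∧ ∀ j, v (s (j, false)) = v (s (j, true))})
  refine ⟨s, ?_⟩
  intro v hv hp a b
  by_contra hab
  rw [mem_reix] at hv
  obtain ⟨t, ht⟩ := step_swap U h s _ hv (by simpa using hp) a b (by simpa using hab)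
  exact absurd (Set.ncard_lt_ncard ht (Set.toFinite _)) (not_lt.2 (hs t))

theorem one_mem_code {κ : Type} [Fintype κ] (U : Submodule (ZMod 2) (κ → ZMod 2))
    (h : SelfDualCode U) : (1 : κ → ZMod 2) ∈ U := by
  rw [h]
  intro x hx
  rw [← (h x).1 hx x hx]
  refine Finset.sum_congr rfl fun i _ => ?_
  rcases z2_cases (x i) with h | h <;> simp [h]

theorem sum_code {κ : Type} [Fintype κ] (U : Submodule (ZMod 2) (κ → ZMod 2))
    (h : SelfDualCode U) (x : κ → ZMod 2) (hx : x ∈ U) : ∑ i, x i = 0 := by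
  have := (h _).1 (one_mem_code U h) x hx
  simpa using this

/-- Differences along pairs. -/
def diffMap : (ι × Bool → ZMod 2) →ₗ[ZMod 2] (ι → ZMod 2) where
  toFun v j := v (j, false) + v (j, true)
  map_add' u v := by ext j; simp only [Pi.add_apply]; ring
  map_smul' c v := by ext j; simp only [Pi.smul_apply, smul_eq_mul, RingHom.id_apply]; ring

theorem exists_diff (U : Submodule (ZMod 2) (ι × Bool → ZMod 2)) (h : SelfDualCode U)
    (hr : PairRigid U) (i l : ι) :
    ∃ v ∈ U, diffMap v = Pi.single i 1 + Pi.single l 1 := by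
  by_contra hcon
  have hnot : (Pi.single i 1 + Pi.single l 1 : ι → ZMod 2) ∉ U.map diffMap := by
    rintro ⟨v, hv, e⟩
    exact hcon ⟨v, hv, e⟩
  obtain ⟨f, hf, hf2⟩ := Submodule.exists_dual_map_eq_bot_of_notMem hnot inferInstance
  have hf0 : ∀ v ∈ U, f (diffMap v) = 0 := by
    intro v hv
    have : f (diffMap v) ∈ (U.map diffMap).map f :=
      Submodule.mem_map_of_mem (Submodule.mem_map_of_mem hv)
    rwa [hf2, Submodule.mem_bot] at this
  have hy : (fun k : ι × Bool => f (Pi.single k.1 1)) ∈ U := by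
    rw [h]
    intro x hx
    rw [sum_pairs, ← hf0 x hx]
    conv_rhs => rw [pi_eq_sum_univ' (diffMap x)]
    rw [map_sum]
    refine Finset.sum_congr rfl fun j _ => ?_
    rw [map_smul, ← add_mul]
    rfl
  have := hr _ hy (fun j => rfl) i l
  apply hf
  rw [map_add]
  simp only at this
  rw [this]
  exact CharTwo.add_self_eq_zero _

theorem exists_rows (U : Submodule (ZMod 2) (ι × Bool → ZMod 2)) (h : SelfDualCode U)
    (hr : PairRigid U) (i l : ι) :
    ∃ v ∈ U, (i ≠ l → v (l, false) = 1 ∧ v (l, true) = 0 ∧ v (i, false) + v (i, true) = 1 ∧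
      ∀ j, j ≠ i → j ≠ l → v (j, false) = v (j, true)) ∧ (i = l → v = 1) := by
  by_cases hil : i = l
  · exact ⟨1, one_mem_code U h, by simp [hil]⟩
  obtain ⟨v, hv, hd⟩ := exists_diff U h hr i l
  have hl : v (l, false) + v (l, true) = 1 := by
    have := congrFun hd l
    simpa [diffMap, Ne.symm hil] using this
  have hi : v (i, false) + v (i, true) = 1 := by
    have := congrFun hd i
    simpa [diffMap, hil] using this
  have hj : ∀ j, j ≠ i → j ≠ l → v (j, false) = v (j, true) := by
    intro j h1 h2
    have := congrFun hd j
    apply z2_add_eq_zero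
    simpa [diffMap, h1, h2] using this
  rcases z2_cases (v (l, false)) with h0 | h1
  · refine ⟨v + 1, U.add_mem hv (one_mem_code U h), fun _ => ⟨?_, ?_, ?_, ?_⟩, fun e => absurd e hil⟩
    · simp [h0]
    · rw [h0, zero_add] at hl
      simp only [Pi.add_apply, hl, Pi.one_apply]; rfl
    · simp only [Pi.add_apply, Pi.one_apply]
      rw [← hi]
      generalize v (i, false) = x
      generalize v (i, true) = y
      revert x y; decide
    · intro j a b
      simp [hj j a b]
  · refine ⟨v, hv, fun _ => ⟨h1, ?_, hi, hj⟩, fun e => absurd e hil⟩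
    rw [h1] at hl
    simpa using hl

theorem rows_span (U : Submodule (ZMod 2) (ι × Bool → ZMod 2)) (h : SelfDualCode U)
    (hr : PairRigid U) (l : ι) (r : ι → ι × Bool → ZMod 2) (hrU : ∀ i, r i ∈ U)
    (h1 : r l = 1) (h2 : ∀ i, i ≠ l → r i (i, false) + r i (i, true) = 1)
    (h3 : ∀ i, i ≠ l → ∀ j, j ≠ i → j ≠ l → r i (j, false) = r i (j, true)) :
    U = Submodule.span (ZMod 2) (Set.range r) := by
  apply le_antisymm
  · intro v hv
    set c : ι → ZMod 2 := diffMap v with hc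
    set u := v + ∑ i ∈ Finset.univ.erase l, c i • r i with hu
    have hS : ∑ i ∈ Finset.univ.erase l, c i • r i ∈ Submodule.span (ZMod 2) (Set.range r) :=
      Submodule.sum_mem _ fun i _ => Submodule.smul_mem _ _ (Submodule.subset_span ⟨i, rfl⟩)
    have huU : u ∈ U := U.add_mem hv (Submodule.sum_mem _ fun i _ => U.smul_mem _ (hrU i))
    have hdu : ∀ j, j ≠ l → diffMap u j = 0 := by
      intro j hj
      rw [hu, map_add, map_sum, Pi.add_apply, Finset.sum_apply,
        Finset.sum_eq_single_of_mem j (by simp [hj])]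
      · rw [map_smul, Pi.smul_apply, ← hc]
        have : diffMap (r j) j = 1 := h2 j hj
        rw [this, smul_eq_mul, mul_one]
        exact CharTwo.add_self_eq_zero _
      · intro i hi hij
        rw [map_smul, Pi.smul_apply]
        have : diffMap (r i) j = 0 := by
          change r i (j, false) + r i (j, true) = 0
          rw [h3 i (Finset.ne_of_mem_erase hi) j hij.symm hj]
          exact CharTwo.add_self_eq_zero _
        rw [this, smul_zero]
    have hdl : diffMap u l = 0 := by
      have := sum_code U h u huU
      rw [sum_pairs] at this
      rwa [Finset.sum_eq_single_of_mem l (Finset.mem_univ _)] at this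
      intro j _ hj
      exact hdu j hj
    have hp : ∀ j, u (j, false) = u (j, true) := by
      intro j
      apply z2_add_eq_zero
      by_cases hj : j = l
      · subst hj; exact hdl
      · exact hdu j hj
    have hconst : u = u (l, false) • r l := by
      ext ⟨j, b⟩
      rw [h1]
      cases b
      · simpa using hr u huU hp j l
      · rw [← hp j]; simpa using hr u huU hp j l
    have huS : u ∈ Submodule.span (ZMod 2) (Set.range r) := by
      rw [hconst]; exact Submodule.smul_mem _ _ (Submodule.subset_span ⟨l, rfl⟩)
    exact (Submodule.add_mem_iff_left _ hS).1 huS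
  · rw [Submodule.span_le]
    rintro _ ⟨i, rfl⟩
    exact hrU i

/-- Flip the pairs selected by `s`. -/
def flipPairs (s : ι → Bool) : Equiv.Perm (ι × Bool) where
  toFun k := (k.1, xor (s k.1) k.2)
  invFun k := (k.1, xor (s k.1) k.2)
  left_inv k := by simp
  right_inv k := by simp

theorem core (U : Submodule (ZMod 2) (ι × Bool → ZMod 2)) (h : SelfDualCode U) (l : ι) :
    ∃ (s : Equiv.Perm (ι × Bool)) (r : ι → ι × Bool → ZMod 2),
      r l = 1 ∧ (∀ i, i ≠ l → r i (l, false) = 1 ∧ r i (l, true) = 0 ∧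
        r i (i, false) = 0 ∧ r i (i, true) = 1 ∧
        ∀ j, j ≠ i → j ≠ l → r i (j, false) = r i (j, true)) ∧
      (∀ i j, i ≠ l → j ≠ l → i ≠ j → r i (j, false) + r j (i, false) = 1) ∧
      reix s U = Submodule.span (ZMod 2) (Set.range r) := by
  obtain ⟨s, hs⟩ := exists_rigid U h
  choose r hrU hr hr1 using fun i => exists_rows _ (selfDual_reix s U h) hs i l
  let f : Equiv.Perm (ι × Bool) := flipPairs (fun i => if i = l then false else r i (i, false) == 1)
  have hsd : SelfDualCode (reix (f.trans s) U) := selfDual_reix _ U h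
  have hmem : ∀ v, v ∈ reix s U → v ∘ f ∈ reix (f.trans s) U := by
    intro v hv
    rw [mem_reix] at hv ⊢
    convert hv using 1
    ext k; simp
  have hfl : ∀ b, f (l, b) = (l, b) := by intro b; simp [f, flipPairs]
  have hfp : ∀ (v : ι × Bool → ZMod 2) j,
      v (j, false) = v (j, true) → ∀ b c, v (f (j, b)) = v (j, c) := by
    intro v j hv b c
    change v (j, _) = _
    generalize xor _ b = d
    cases c <;> cases d <;> simp [hv]
  have hfi : ∀ i, i ≠ l → r i (f (i, false)) = 0 ∧ r i (f (i, true)) = 1 := by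
    intro i hi
    have := (hr i hi).2.2.1
    rcases z2_cases (r i (i, false)) with h0 | h0
    · rw [h0, zero_add] at this
      have h01 : ((0 : ZMod 2) == 1) = false := by decide
      simp [f, flipPairs, hi, h0, this, h01]
    · rw [h0] at this
      have h9 : r i (i, true) = 0 := by simpa using this
      simp [f, flipPairs, hi, h0, h9]
  have hrig : PairRigid (reix (f.trans s) U) := by
    intro v hv hp
    have hv' : v ∘ f.symm ∈ reix s U := by
      rw [mem_reix] at hv ⊢
      exact hv
    have hq : ∀ j b c, (v ∘ f.symm) (j, b) = v (j, c) := by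
      intro j b c
      change v (j, _) = _
      generalize xor _ b = d
      cases c <;> cases d <;> simp [hp]
    have := hs _ hv' (fun j => by rw [hq j false false, hq j true false])
    intro a b
    rw [← hq a false, ← hq b false]
    exact this a b
  have P1 : r l ∘ f = 1 := by rw [hr1 l rfl]; rfl
  have P2 : ∀ i, i ≠ l → (r i ∘ f) (l, false) = 1 ∧ (r i ∘ f) (l, true) = 0 ∧
        (r i ∘ f) (i, false) = 0 ∧ (r i ∘ f) (i, true) = 1 ∧
        ∀ j, j ≠ i → j ≠ l → (r i ∘ f) (j, false) = (r i ∘ f) (j, true) := by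
    intro i hi
    obtain ⟨a, b, -, d⟩ := hr i hi
    refine ⟨?_, ?_, (hfi i hi).1, (hfi i hi).2, ?_⟩
    · simpa [hfl] using a
    · simpa [hfl] using b
    · intro j h1 h2
      simp only [Function.comp_apply]
      rw [hfp _ j (d j h1 h2) _ false, hfp _ j (d j h1 h2) _ false]
  refine ⟨f.trans s, fun i => r i ∘ f, P1, P2, ?_, ?_⟩
  · intro i j hi hj hij
    change (r i ∘ f) (j, false) + (r j ∘ f) (i, false) = 1
    have hs := (hsd _).1 (hmem _ (hrU i)) _ (hmem _ (hrU j))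
    obtain ⟨a1, a2, a3, a4, a5⟩ := P2 i hi
    obtain ⟨b1, b2, b3, b4, b5⟩ := P2 j hj
    generalize r i ∘ f = x at *
    generalize r j ∘ f = y at *
    rw [sum_pairs] at hs
    have hz : ∀ k ∈ Finset.univ, k ∉ ({l, i, j} : Finset ι) →
        y (k, false) * x (k, false) + y (k, true) * x (k, true) = 0 := by
      intro k _ hk
      simp only [Finset.mem_insert, Finset.mem_singleton, not_or] at hk
      rw [a5 k hk.2.1 hk.1, b5 k hk.2.2 hk.1]
      exact CharTwo.add_self_eq_zero _
    rw [← Finset.sum_subset (Finset.subset_univ {l, i, j}) hz,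
      Finset.sum_insert (by simp [hi.symm, hj.symm]), Finset.sum_pair hij,
      a1, a2, a3, a4, b1, b2, b3, b4, ← a5 j hij.symm hj, ← b5 i hij hi] at hs
    revert hs
    generalize x (j, false) = p
    generalize y (i, false) = q
    revert p q
    decide
  · refine rows_span _ hsd hrig l _ (fun i => hmem _ (hrU i)) P1 ?_ ?_
    · intro i hi
      obtain ⟨-, -, a3, a4, -⟩ := P2 i hi
      rw [a3, a4, zero_add]
    · intro i hi
      exact (P2 i hi).2.2.2.2

end

/-- Splitting coordinates into consecutive pairs. -/
def pairEquiv (n : ℕ) : Fin (2 * n) ≃ Fin n × Bool where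
  toFun k := (⟨k.val / 2, by have := k.isLt; omega⟩, decide (k.val % 2 = 1))
  invFun p := ⟨2 * p.1.val + p.2.toNat, by
    have := p.1.isLt; have := Bool.toNat_le p.2; omega⟩
  left_inv k := by
    ext
    by_cases hk : k.val % 2 = 1
    · simp [hk]; omega
    · simp [hk]; omega
  right_inv p := by
    obtain ⟨j, b⟩ := p
    cases b
    · simp
    · ext <;> simp
      omega

theorem pairEquiv_even (n : ℕ) (j : Fin n) (h : 2 * j.val < 2 * n) :
    pairEquiv n ⟨2 * j.val, h⟩ = (j, false) := by
  rw [← Equiv.eq_symm_apply]; rfl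

theorem pairEquiv_odd (n : ℕ) (j : Fin n) (h : 2 * j.val + 1 < 2 * n) :
    pairEquiv n ⟨2 * j.val + 1, h⟩ = (j, true) := by
  rw [← Equiv.eq_symm_apply]; rfl


/-- The `(i,j)` block (a pair in `F_2²`) of an `n × 2n` matrix over `F_2`:
`b i j = (M i (2j), M i (2j+1))` (0-indexed), corresponding to
`(M_{i,2j−1}, M_{i,2j})` in 1-indexed notation. -/
def blockOf {n : ℕ} (M : Matrix (Fin n) (Fin (2 * n)) (ZMod 2)) (i j : Fin n) :
    ZMod 2 × ZMod 2 :=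
  (M i ⟨2 * j.val, by have := j.isLt; omega⟩,
   M i ⟨2 * j.val + 1, by have := j.isLt; omega⟩)

/-- The block matrix of `M` is half-boxed: (1) the bottom row consists of `(1,1)` pairs;
(2) the last column consists of `(1,0)` pairs except in the bottom row;
(3) the diagonal entries are `(0,1)` except in the bottom row;
(4) all other blocks are identical pairs `(0,0)` or `(1,1)`. -/
def IsHalfBoxed {n : ℕ} (M : Matrix (Fin n) (Fin (2 * n)) (ZMod 2)) : Prop :=
  (∀ i j : Fin n, i.val = n - 1 → blockOf M i j = (1, 1)) ∧
  (∀ i j : Fin n, i.val < n - 1 → j.val = n - 1 → blockOf M i j = (1, 0)) ∧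
  (∀ i : Fin n, i.val < n - 1 → blockOf M i i = (0, 1)) ∧
  (∀ i j : Fin n, i.val < n - 1 → j.val < n - 1 → i ≠ j →
    blockOf M i j = (0, 0) ∨ blockOf M i j = (1, 1))

/-- The block matrix of `M` is boxed: it is half-boxed and moreover
(5) `b i j + b j i = (1,1)` for all `j < i` below the bottom row. -/
def IsBoxed {n : ℕ} (M : Matrix (Fin n) (Fin (2 * n)) (ZMod 2)) : Prop :=
  IsHalfBoxed M ∧
  ∀ i j : Fin n, j.val < i.val → i.val < n - 1 →
    blockOf M i j + blockOf M j i = (1, 1)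

/-- Every self-dual code of length `2n ≥ 4` is, after a permutation of coordinates,
generated by the rows of a matrix whose block matrix is boxed. -/
theorem stmt_11 (n : ℕ) (hn : 2 ≤ n)
    (V : Submodule (ZMod 2) (Fin (2 * n) → ZMod 2))
    (hV : ∀ y : Fin (2 * n) → ZMod 2, y ∈ V ↔ ∀ x ∈ V, ∑ i, x i * y i = 0) :
    ∃ (σ : Equiv.Perm (Fin (2 * n))) (M : Matrix (Fin n) (Fin (2 * n)) (ZMod 2)),
      IsBoxed M ∧
      Submodule.map (LinearMap.funLeft (ZMod 2) (ZMod 2) σ) V =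
        Submodule.span (ZMod 2) (Set.range fun i : Fin n => M i) := by
  let e := pairEquiv n
  let l : Fin n := ⟨n - 1, by omega⟩
  have hl : ∀ i : Fin n, i.val < n - 1 → i ≠ l := by
    rintro i hi rfl
    exact lt_irrefl _ hi
  have hl' : ∀ i : Fin n, i.val = n - 1 → i = l := fun i hi => Fin.ext hi
  have hV' : SelfDualCode V := hV
  obtain ⟨s, r, h1, h2, h3, h4⟩ := core _ (selfDual_reix e.symm V hV') l
  let M : Matrix (Fin n) (Fin (2 * n)) (ZMod 2) := fun i k => r i (e k)
  have hb : ∀ i j, blockOf M i j = (r i (j, false), r i (j, true)) := by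
    intro i j
    simp only [blockOf, M, e, pairEquiv_even, pairEquiv_odd]
  refine ⟨(e.trans s).trans e.symm, M, ⟨⟨?_, ?_, ?_, ?_⟩, ?_⟩, ?_⟩
  · intro i j hi
    rw [hb, hl' i hi, h1]; rfl
  · intro i j hi hj
    rw [hb, hl' j hj, (h2 i (hl i hi)).1, (h2 i (hl i hi)).2.1]
  · intro i hi
    rw [hb, (h2 i (hl i hi)).2.2.1, (h2 i (hl i hi)).2.2.2.1]
  · intro i j hi hj hij
    rw [hb, (h2 i (hl i hi)).2.2.2.2 j hij.symm (hl j hj)]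
    rcases z2_cases (r i (j, true)) with h | h <;> simp [h]
  · intro i j hji hi
    have hi' := hl i hi
    have hj' := hl j (by omega)
    have hij : i ≠ j := by rintro rfl; exact lt_irrefl _ hji
    rw [hb, hb, Prod.mk_add_mk, ← (h2 i hi').2.2.2.2 j hij.symm hj',
      ← (h2 j hj').2.2.2.2 i hij hi', h3 i j hi' hj' hij]
  · have hM : (Set.range fun i : Fin n => M i) =
        LinearMap.funLeft (ZMod 2) (ZMod 2) e '' Set.range r := by
      rw [← Set.range_comp]; rfl
    rw [hM, ← Submodule.map_span, ← h4]
    ext v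
    constructor
    · rintro ⟨u, hu, rfl⟩
      refine ⟨u ∘ e.symm ∘ s, ?_, ?_⟩
      · change (u ∘ e.symm ∘ s) ∘ s.symm ∈ reix e.symm V
        rw [mem_reix]
        have he : ((u ∘ e.symm ∘ s) ∘ s.symm) ∘ e.symm.symm = u := by
          ext k; simp
        rw [he]; exact hu
      · ext k; simp [LinearMap.funLeft_apply]
    · rintro ⟨u, hu, rfl⟩
      refine ⟨u ∘ s.symm ∘ e, hu, ?_⟩
      ext k; simp [LinearMap.funLeft_apply]
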